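/- For every integer n with n = 8, n = 10, n = 14, or n ≥ 16, the cycle graph C_n satisfies rvcl(C_n) = ⌈n/2⌉. -/

import Mathlib

namespace LocatingRainbow

open SimpleGraph

variable {V : Type*}

/-- The internal vertices of a walk: its support without the endpoints. -/
def internalVertices {G : SimpleGraph V} {u v : V} (p : G.Walk u v) : List V :=
  p.support.tail.dropLast

/-- `c` is a rainbow vertex coloring of `G` (with colors in `Fin k`) if any two distinct
vertices are joined by a path whose internal vertices have pairwise distinct colors. -/
def IsRainbowVertexColoring (G : SimpleGraph V) {k : ℕ} (c : V → Fin k) : Prop :=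
  ∀ u v : V, u ≠ v → ∃ p : G.Walk u v, p.IsPath ∧ ((internalVertices p).map c).Nodup

/-- The distance from a vertex `v` to the color class of the color `i`. -/
noncomputable def distToColor (G : SimpleGraph V) {k : ℕ} (c : V → Fin k) (v : V) (i : Fin k) :
    ℕ :=
  sInf {m | ∃ y, c y = i ∧ G.dist v y = m}

/-- The rainbow code of a vertex `v`: the vector of distances to all color classes. -/
noncomputable def rainbowCode (G : SimpleGraph V) {k : ℕ} (c : V → Fin k) (v : V) :
    Fin k → ℕ :=
  fun i => distToColor G c v i

/-- `c` is a locating rainbow coloring if it is a rainbow vertex coloring and distinct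
vertices have distinct rainbow codes. -/
def IsLocatingRainbowColoring (G : SimpleGraph V) {k : ℕ} (c : V → Fin k) : Prop :=
  IsRainbowVertexColoring G c ∧ Function.Injective (rainbowCode G c)

/-- The rainbow vertex connection number of `G`. -/
noncomputable def rvc (G : SimpleGraph V) : ℕ :=
  sInf {k | ∃ c : V → Fin k, IsRainbowVertexColoring G c}

/-- The locating rainbow connection number of `G`. -/
noncomputable def rvcl (G : SimpleGraph V) : ℕ :=
  sInf {k | ∃ c : V → Fin k, IsLocatingRainbowColoring G c}

end LocatingRainbow

namespace LocatingRainbow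

open SimpleGraph

/-- Cyclic distance between two positions. -/
def cd (n a b : ℕ) : ℕ := min ((a - b) + (b - a)) (n - ((a - b) + (b - a)))

lemma cyc_adj {n : ℕ} (hn : 3 ≤ n) (a b : Fin n) : (cycleGraph n).Adj a b ↔
    (a.val + 1 = b.val ∨ b.val + 1 = a.val ∨ (a.val = 0 ∧ b.val = n - 1) ∨
      (b.val = 0 ∧ a.val = n - 1)) := by
  rw [cycleGraph_adj']
  have ha := a.isLt
  have hb := b.isLt
  rcases lt_trichotomy a b with h | h | h
  · rw [Fin.coe_sub_iff_le.2 h.le, Fin.coe_sub_iff_lt.2 h]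
    have : a.val < b.val := h
    omega
  · subst h
    have : NeZero n := ⟨by omega⟩
    rw [sub_self, Fin.val_zero]
    omega
  · rw [Fin.coe_sub_iff_le.2 h.le, Fin.coe_sub_iff_lt.2 h]
    have : b.val < a.val := h
    omega

lemma walk_up {n : ℕ} (hn : 3 ≤ n) (d : ℕ) : ∀ (a b : Fin n), b.val = a.val + d →
    ∃ p : (cycleGraph n).Walk a b, p.length = d ∧ ∀ w ∈ p.support, a ≤ w ∧ w ≤ b := by
  induction d with
  | zero =>
    intro a b h
    obtain rfl : a = b := Fin.ext (by omega)
    exact ⟨Walk.nil, rfl, by simp⟩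
  | succ d ih =>
    intro a b h
    have hb := b.isLt
    obtain ⟨p, hp, hs⟩ := ih ⟨a.val + 1, by omega⟩ b (by simp; omega)
    have hadj : (cycleGraph n).Adj a ⟨a.val + 1, by omega⟩ := by
      rw [cyc_adj hn]; simp
    refine ⟨Walk.cons hadj p, by simp [hp], ?_⟩
    intro w hw
    rw [Walk.support_cons, List.mem_cons] at hw
    rcases hw with rfl | hw
    · simp only [Fin.le_def]; omega
    · have := hs w hw
      simp only [Fin.le_def] at *
      omega

lemma walk_out {n : ℕ} (hn : 3 ≤ n) (a b : Fin n) (h : a < b) :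
    ∃ p : (cycleGraph n).Walk a b, p.length = n - (b.val - a.val) ∧
      ∀ w ∈ p.support, w ≤ a ∨ b ≤ w := by
  have ha := a.isLt
  have hb := b.isLt
  have hab : a.val < b.val := h
  obtain ⟨p, hp, hps⟩ := walk_up hn a.val ⟨0, by omega⟩ a (by simp)
  obtain ⟨q, hq, hqs⟩ := walk_up hn (n - 1 - b.val) b ⟨n - 1, by omega⟩ (by simp; omega)
  have hadj : (cycleGraph n).Adj ⟨0, by omega⟩ ⟨n - 1, by omega⟩ := by
    rw [cyc_adj hn]; simp
  refine ⟨p.reverse.append (Walk.cons hadj q.reverse), ?_, ?_⟩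
  · simp [hp, hq]; omega
  · intro w hw
    rw [Walk.mem_support_append_iff, Walk.support_cons, List.mem_cons] at hw
    simp only [Walk.support_reverse, List.mem_reverse] at hw
    rcases hw with hw | rfl | hw
    · exact Or.inl (hps w hw).2
    · left; simp [Fin.le_def]
    · exact Or.inr (hqs w hw).1

lemma cd_le_length {n : ℕ} (hn : 3 ≤ n) {a b : Fin n} (p : (cycleGraph n).Walk a b) :
    cd n a b ≤ p.length := by
  induction p with
  | nil => simp [cd]
  | @cons u v w h p ih =>
    rw [cyc_adj hn] at h
    rw [Walk.length_cons]
    have := u.isLt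
    have := v.isLt
    have := w.isLt
    unfold cd at *
    omega

lemma exists_walk_cd {n : ℕ} (hn : 3 ≤ n) (a b : Fin n) (h : a ≤ b) :
    ∃ p : (cycleGraph n).Walk a b, p.length ≤ cd n a b := by
  have hab : a.val ≤ b.val := h
  have hb := b.isLt
  rcases le_total (b.val - a.val) (n - (b.val - a.val)) with h1 | h1
  · obtain ⟨p, hp, -⟩ := walk_up hn (b.val - a.val) a b (by omega)
    exact ⟨p, by unfold cd; omega⟩
  · obtain ⟨p, hp, -⟩ := walk_out hn a b (by rw [Fin.lt_def]; omega)
    exact ⟨p, by unfold cd; omega⟩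

lemma cd_comm (n a b : ℕ) : cd n a b = cd n b a := by unfold cd; omega

lemma dist_eq_cd {n : ℕ} (hn : 3 ≤ n) (a b : Fin n) : (cycleGraph n).dist a b = cd n a b := by
  apply le_antisymm
  · rcases le_total a b with h | h
    · obtain ⟨p, hp⟩ := exists_walk_cd hn a b h
      exact (dist_le p).trans hp
    · obtain ⟨p, hp⟩ := exists_walk_cd hn b a h
      rw [dist_comm, cd_comm]
      exact (dist_le p).trans hp
  · obtain ⟨p, hp⟩ := (cycleGraph_preconnected a b).exists_walk_length_eq_dist
    rw [← hp]
    exact cd_le_length hn p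

/-- Every vertex color occurs at least as close to `v` as to `u`. -/
def Dom {n k : ℕ} (c : Fin n → Fin k) (u v : Fin n) : Prop :=
  ∀ y, ∃ y', c y' = c y ∧ cd n v y' ≤ cd n u y

instance {n k : ℕ} (c : Fin n → Fin k) (u v : Fin n) : Decidable (Dom c u v) := by
  unfold Dom; infer_instance

lemma dom_of_code {n k : ℕ} (hn : 3 ≤ n) (c : Fin n → Fin k) (u v : Fin n)
    (h : rainbowCode (cycleGraph n) c u = rainbowCode (cycleGraph n) c v) : Dom c u v := by
  intro y
  have h1 := congrFun h (c y)
  unfold rainbowCode distToColor at h1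
  have hne : {m | ∃ z, c z = c y ∧ (cycleGraph n).dist v z = m}.Nonempty := ⟨_, y, rfl, rfl⟩
  obtain ⟨z, hz, hz'⟩ := Nat.sInf_mem hne
  refine ⟨z, hz, ?_⟩
  rw [← dist_eq_cd hn, ← dist_eq_cd hn, hz', ← h1]
  exact Nat.sInf_le ⟨y, rfl, rfl⟩

lemma code_le_of_dom {n k : ℕ} (hn : 3 ≤ n) (c : Fin n → Fin k) (u v : Fin n)
    (h : Dom c u v) (i : Fin k) :
    distToColor (cycleGraph n) c v i ≤ distToColor (cycleGraph n) c u i := by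
  unfold distToColor
  by_cases hi : ∃ y, c y = i
  · obtain ⟨y, hy⟩ := hi
    have hne : {m | ∃ z, c z = i ∧ (cycleGraph n).dist u z = m}.Nonempty := ⟨_, y, hy, rfl⟩
    obtain ⟨z, hz, hz'⟩ := Nat.sInf_mem hne
    obtain ⟨y', h1, h2⟩ := h z
    rw [← hz']
    have hmem : (cycleGraph n).dist v y' ∈
        {m | ∃ y, c y = i ∧ (cycleGraph n).dist v y = m} := ⟨y', h1.trans hz, rfl⟩
    refine (Nat.sInf_le hmem).trans ?_
    rw [dist_eq_cd hn, dist_eq_cd hn]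
    exact h2
  · have : {m | ∃ y, c y = i ∧ (cycleGraph n).dist v y = m} = ∅ := by
      ext m
      simp only [Set.mem_ofPred_eq, Set.mem_empty_iff_false, iff_false]
      rintro ⟨y, hy, -⟩
      exact hi ⟨y, hy⟩
    rw [this]
    simp

lemma inj_code_iff {n k : ℕ} (hn : 3 ≤ n) (c : Fin n → Fin k) :
    Function.Injective (rainbowCode (cycleGraph n) c) ↔
      ∀ u v, Dom c u v → Dom c v u → u = v := by
  constructor
  · intro h u v h1 h2
    apply h
    funext i
    exact le_antisymm (code_le_of_dom hn c v u h2 i) (code_le_of_dom hn c u v h1 i)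
  · intro h u v huv
    exact h u v (dom_of_code hn c u v huv) (dom_of_code hn c v u huv.symm)

/-- Arc formulation of the rainbow condition on a cycle. -/
def Arc {n k : ℕ} (c : Fin n → Fin k) : Prop :=
  ∀ a b : Fin n, a < b → Set.InjOn c {w | a < w ∧ w < b} ∨ Set.InjOn c {w | w < a ∨ b < w}

lemma mem_of_internal {V : Type*} {G : SimpleGraph V} {u v w : V} (p : G.Walk u v)
    (hp : p.IsPath) (hw : w ∈ internalVertices p) : w ∈ p.support ∧ w ≠ u ∧ w ≠ v := by
  unfold internalVertices at hw
  have hnd := hp.support_nodup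
  have hwt : w ∈ p.support.tail := List.dropLast_subset _ hw
  refine ⟨List.mem_of_mem_tail hwt, ?_, ?_⟩
  · rintro rfl
    rw [← Walk.cons_tail_support p, List.nodup_cons] at hnd
    exact hnd.1 hwt
  · rintro rfl
    have hne : p.support.tail ≠ [] := List.ne_nil_of_mem hwt
    have hl : p.support.tail.getLast hne = w := by
      rw [List.getLast_tail]
      exact Walk.getLast_support p
    have hnd' := hnd.tail
    rw [← List.dropLast_append_getLast hne, hl, List.nodup_append] at hnd'
    exact hnd'.2.2 w hw w (by simp) rfl

lemma internal_of_mem {V : Type*} {G : SimpleGraph V} {u v w : V} (p : G.Walk u v)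
    (hw : w ∈ p.support) (hu : w ≠ u) (hv : w ≠ v) : w ∈ internalVertices p := by
  unfold internalVertices
  rw [← Walk.cons_tail_support p, List.mem_cons] at hw
  have hwt := hw.resolve_left hu
  have hne : p.support.tail ≠ [] := List.ne_nil_of_mem hwt
  have hl : p.support.tail.getLast hne = v := by
    rw [List.getLast_tail]
    exact Walk.getLast_support p
  rw [← List.dropLast_append_getLast hne, hl, List.mem_append, List.mem_singleton] at hwt
  exact hwt.resolve_right hv

lemma exists_path_of_walk {V : Type*} {G : SimpleGraph V} {k : ℕ} (c : V → Fin k) {u v : V}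
    (p : G.Walk u v) (S : Set V) (hS : ∀ w ∈ p.support, w ≠ u → w ≠ v → w ∈ S)
    (hc : Set.InjOn c S) : ∃ p : G.Walk u v, p.IsPath ∧ ((internalVertices p).map c).Nodup := by
  classical
  refine ⟨p.bypass, p.bypass_isPath, ?_⟩
  apply List.Nodup.map_on
  · intro x hx y hy hxy
    have h1 := mem_of_internal _ p.bypass_isPath hx
    have h2 := mem_of_internal _ p.bypass_isPath hy
    exact hc (hS x (p.support_bypass_subset_support h1.1) h1.2.1 h1.2.2)
      (hS y (p.support_bypass_subset_support h2.1) h2.2.1 h2.2.2) hxy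
  · exact (p.bypass_isPath.support_nodup.tail).sublist (List.dropLast_sublist _)

lemma exists_walk_of_inj {n k : ℕ} (hn : 3 ≤ n) (c : Fin n → Fin k) (a b : Fin n) (h : a < b)
    (H : Set.InjOn c {w | a < w ∧ w < b} ∨ Set.InjOn c {w | w < a ∨ b < w}) :
    ∃ (S : Set (Fin n)) (p : (cycleGraph n).Walk a b), Set.InjOn c S ∧
      ∀ w ∈ p.support, w ≠ a → w ≠ b → w ∈ S := by
  rcases H with H | H
  · obtain ⟨p, -, hs⟩ := walk_up hn (b.val - a.val) a b (by rw [Fin.lt_def] at h; omega)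
    exact ⟨_, p, H, fun w hw h1 h2 => ⟨lt_of_le_of_ne (hs w hw).1 h1.symm,
      lt_of_le_of_ne (hs w hw).2 h2⟩⟩
  · obtain ⟨p, -, hs⟩ := walk_out hn a b h
    refine ⟨_, p, H, fun w hw h1 h2 => ?_⟩
    rcases hs w hw with h | h
    · exact Or.inl (lt_of_le_of_ne h h1)
    · exact Or.inr (lt_of_le_of_ne h h2.symm)

lemma rainbow_of_arc {n k : ℕ} (hn : 3 ≤ n) (c : Fin n → Fin k) (h : Arc c) :
    IsRainbowVertexColoring (cycleGraph n) c := by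
  intro u v huv
  rcases lt_or_gt_of_ne huv with h1 | h1
  · obtain ⟨S, p, hS, hp⟩ := exists_walk_of_inj hn c u v h1 (h u v h1)
    exact exists_path_of_walk c p S hp hS
  · obtain ⟨S, p, hS, hp⟩ := exists_walk_of_inj hn c v u h1 (h v u h1)
    exact exists_path_of_walk c p.reverse S (fun w hw h1 h2 => hp w (by simpa using hw) h2 h1) hS

lemma walk_stays {V : Type*} {G : SimpleGraph V} {u v : V} (p : G.Walk u v) (S : Set V)
    (x y : V) (hS : ∀ a b, a ∈ S → G.Adj a b → b ≠ x → b ≠ y → b ∈ S) (hu : u ∈ S)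
    (hx : x ∉ p.support) (hy : y ∉ p.support) : v ∈ S := by
  induction p with
  | nil => exact hu
  | @cons a b d h p ih =>
    rw [Walk.support_cons, List.mem_cons, not_or] at hx hy
    refine ih (hS a b hu h ?_ ?_) hx.2 hy.2
    · rintro rfl; exact hx.2 p.start_mem_support
    · rintro rfl; exact hy.2 p.start_mem_support

lemma arc_of_rainbow {n k : ℕ} (hn : 3 ≤ n) (c : Fin n → Fin k)
    (h : IsRainbowVertexColoring (cycleGraph n) c) : Arc c := by
  intro a b hab
  obtain ⟨p, -, hnd⟩ := h a b hab.ne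
  have key : (∀ w, a < w → w < b → w ∈ p.support) ∨ (∀ w, w < a ∨ b < w → w ∈ p.support) := by
    by_contra hcon
    push Not at hcon
    obtain ⟨⟨x, hx1, hx2, hx⟩, y, hy1, hy⟩ := hcon
    rw [Fin.lt_def] at hx1 hx2
    rcases hy1 with hy1 | hy1
    · rw [Fin.lt_def] at hy1
      have := walk_stays p {w | y.val < w.val ∧ w.val < x.val} x y (by
        intro r s hr hrs h1 h2
        rw [cyc_adj hn] at hrs
        have h1 := Fin.val_ne_of_ne h1
        have h2 := Fin.val_ne_of_ne h2
        have := x.isLt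
        have := b.isLt
        simp only [Set.mem_ofPred_eq] at *
        omega) ⟨hy1, hx1⟩ hx hy
      simp only [Set.mem_ofPred_eq] at this
      omega
    · rw [Fin.lt_def] at hy1
      have := walk_stays p {w | w.val < x.val ∨ y.val < w.val} x y (by
        intro r s hr hrs h1 h2
        rw [cyc_adj hn] at hrs
        have h1 := Fin.val_ne_of_ne h1
        have h2 := Fin.val_ne_of_ne h2
        have := x.isLt
        have := y.isLt
        have := s.isLt
        have := r.isLt
        simp only [Set.mem_ofPred_eq] at *
        omega) (Or.inl hx1) hx hy
      simp only [Set.mem_ofPred_eq] at this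
      omega
  have hinj := List.inj_on_of_nodup_map hnd
  rcases key with key | key
  · left
    rintro x ⟨hx1, hx2⟩ y ⟨hy1, hy2⟩ hxy
    exact hinj (internal_of_mem p (key x hx1 hx2) hx1.ne' hx2.ne)
      (internal_of_mem p (key y hy1 hy2) hy1.ne' hy2.ne) hxy
  · right
    have aux : ∀ x, x < a ∨ b < x → x ∈ internalVertices p := by
      intro x hx
      refine internal_of_mem p (key x hx) ?_ ?_
      · rcases hx with hx | hx
        · exact hx.ne
        · exact (hab.trans hx).ne'
      · rcases hx with hx | hx
        · exact (hx.trans hab).ne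
        · exact hx.ne'
    intro x hx y hy hxy
    exact hinj (aux x hx) (aux y hy) hxy

lemma card_in {n k : ℕ} (c : Fin n → Fin k) (a b : Fin n)
    (h : Set.InjOn c {w | a < w ∧ w < b}) : b.val - a.val - 1 ≤ k := by
  have hb := b.isLt
  have := Fintype.card_le_of_injective
    (fun i : Fin (b.val - a.val - 1) => c ⟨a.val + 1 + i.val, by omega⟩) (by
      intro i j hij
      have := h (by simp only [Set.mem_ofPred_eq, Fin.lt_def]; omega)
        (by simp only [Set.mem_ofPred_eq, Fin.lt_def]; omega) hij
      rw [Fin.ext_iff] at this ⊢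
      simp only at this
      omega)
  simpa using this

lemma card_out {n k : ℕ} (c : Fin n → Fin k) (a b : Fin n) (hab : a < b)
    (h : Set.InjOn c {w | w < a ∨ b < w}) : n - (b.val - a.val + 1) ≤ k := by
  have hb := b.isLt
  rw [Fin.lt_def] at hab
  have := Fintype.card_le_of_injective
    (fun i : Fin (n - (b.val - a.val + 1)) =>
      c ⟨if i.val < a.val then i.val else i.val + (b.val - a.val + 1), by split <;> omega⟩) (by
      intro i j hij
      have := h (by simp only [Set.mem_ofPred_eq, Fin.lt_def]; split <;> omega)
        (by simp only [Set.mem_ofPred_eq, Fin.lt_def]; split <;> omega) hij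
      rw [Fin.ext_iff] at this ⊢
      simp only at this
      split at this <;> split at this <;> omega)
  simpa using this

/-- Equal colors are far apart. -/
lemma gap {n k : ℕ} (hn : 3 ≤ n) (c : Fin n → Fin k) (h : Arc c) (a b : Fin n) (hab : a < b)
    (hc : c a = c b) : n ≤ b.val - a.val + 3 + k ∧ b.val - a.val ≤ k + 3 := by
  have hb := b.isLt
  have hab' := hab
  rw [Fin.lt_def] at hab
  have nin : ∀ p q : Fin n, p < a → b < q → ¬ Set.InjOn c {w | p < w ∧ w < q} :=
    fun p q hp hq hi => hab'.ne (hi ⟨hp, hab'.trans hq⟩ ⟨hp.trans hab', hq⟩ hc)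
  have nout : ∀ p q : Fin n, (a < p ∨ q < a) → (b < p ∨ q < b) →
      ¬ Set.InjOn c {w | w < p ∨ q < w} :=
    fun p q hp hq hi => hab'.ne (hi hp hq hc)
  constructor
  · by_contra hlt
    by_cases ha0 : a.val = 0
    · by_cases hb1 : b.val + 1 < n - 1
      · let p : Fin n := ⟨b.val + 1, by omega⟩
        let q : Fin n := ⟨n - 1, by omega⟩
        have hpq : p < q := by simp only [p, q, Fin.lt_def]; omega
        rcases h p q hpq with h1 | h1
        · have := card_in c p q h1
          simp only [p, q] at this
          omega
        · exact nout p q (by left; simp only [p, Fin.lt_def]; omega)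
            (by left; simp only [p, Fin.lt_def]; omega) h1
      · omega
    · by_cases hb1 : b.val + 1 < n
      · let p : Fin n := ⟨a.val - 1, by omega⟩
        let q : Fin n := ⟨b.val + 1, by omega⟩
        have hpq : p < q := by simp only [p, q, Fin.lt_def]; omega
        rcases h p q hpq with h1 | h1
        · exact nin p q (by simp only [p, Fin.lt_def]; omega)
            (by simp only [q, Fin.lt_def]; omega) h1
        · have := card_out c p q hpq h1
          simp only [p, q] at this
          omega
      · by_cases ha1 : a.val = 1
        · omega
        · let p : Fin n := ⟨0, by omega⟩
          let q : Fin n := ⟨a.val - 1, by omega⟩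
          have hpq : p < q := by simp only [p, q, Fin.lt_def]; omega
          rcases h p q hpq with h1 | h1
          · have := card_in c p q h1
            simp only [p, q] at this
            omega
          · exact nout p q (by right; simp only [q, Fin.lt_def]; omega)
              (by right; simp only [q, Fin.lt_def]; omega) h1
  · by_contra hlt
    let p : Fin n := ⟨a.val + 1, by omega⟩
    let q : Fin n := ⟨b.val - 1, by omega⟩
    have hpq : p < q := by simp only [p, q, Fin.lt_def]; omega
    rcases h p q hpq with h1 | h1
    · have := card_in c p q h1
      simp only [p, q] at this
      omega
    · exact nout p q (by left; simp only [p, Fin.lt_def]; omega)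
        (by right; simp only [q, Fin.lt_def]; omega) h1

lemma no_arc_large {n k : ℕ} (hn : n = 14 ∨ 16 ≤ n) (hk : 2 * k < n) (c : Fin n → Fin k) :
    ¬ Arc c := by
  intro h
  obtain ⟨i, -, hi⟩ := Finset.exists_lt_card_fiber_of_mul_lt_card_of_maps_to
    (s := (Finset.univ : Finset (Fin n))) (t := (Finset.univ : Finset (Fin k))) (f := c) (n := 2)
    (by simp) (by simp; omega)
  obtain ⟨x, hx, y, hy, z, hz, hxy, hxz, hyz⟩ := Finset.two_lt_card.1 hi
  simp only [Finset.mem_filter, Finset.mem_univ, true_and] at hx hy hz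
  have key : ∀ u v : Fin n, u ≠ v → c u = c v →
      (u.val < v.val ∧ n ≤ v.val - u.val + 3 + k ∧ v.val - u.val ≤ k + 3) ∨
      (v.val < u.val ∧ n ≤ u.val - v.val + 3 + k ∧ u.val - v.val ≤ k + 3) := by
    intro u v huv hc
    rcases lt_or_gt_of_ne huv with h1 | h1
    · exact Or.inl ⟨h1, gap (by omega) c h u v h1 hc⟩
    · exact Or.inr ⟨h1, gap (by omega) c h v u h1 hc.symm⟩
  have h1 := key x y hxy (hx.trans hy.symm)
  have h2 := key x z hxz (hx.trans hz.symm)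
  have h3 := key y z hyz (hy.trans hz.symm)
  omega

/-- The upper-bound coloring. -/
def colNat (m i : ℕ) : ℕ :=
  if i < m then i else if i = m then 1 else if i = m + 1 then 0 else i - m

lemma colNat_eq {m i j : ℕ} (hm : 4 ≤ m) (hij : i < j) (hj : j < 2 * m)
    (h : colNat m i = colNat m j) :
    (i = 1 ∧ j = m) ∨ (i = 0 ∧ j = m + 1) ∨ (2 ≤ i ∧ j = i + m) := by
  unfold colNat at h
  split_ifs at h <;> omega

lemma exists_coloring (n : ℕ) (hn : n = 8 ∨ n = 10 ∨ n = 14 ∨ 16 ≤ n) :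
    ∃ c : Fin n → Fin ((n + 1) / 2), IsLocatingRainbowColoring (cycleGraph n) c := by
  obtain ⟨m, hm⟩ : ∃ m, m = (n + 1) / 2 := ⟨_, rfl⟩
  rw [← hm]
  have hcl : ∀ i : Fin n, colNat m i.val < m := by
    intro i
    have := i.isLt
    unfold colNat
    split_ifs <;> omega
  let c : Fin n → Fin m := fun i => ⟨colNat m i.val, hcl i⟩
  have hc : ∀ i j : Fin n, c i = c j → colNat m i.val = colNat m j.val := by
    intro i j h
    simpa [c] using h
  have hc' : ∀ i j : Fin n, i.val < j.val → c i = c j →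
      (i.val = 1 ∧ j.val = m) ∨ (i.val = 0 ∧ j.val = m + 1) ∨
        (2 ≤ i.val ∧ j.val = i.val + m) := by
    intro i j hij h
    have := j.isLt
    exact colNat_eq (by omega) hij (by omega) (hc i j h)
  have hc'' : ∀ i j : Fin n, c i = c j → i.val = j.val ∨
      (i.val = 1 ∧ j.val = m) ∨ (i.val = 0 ∧ j.val = m + 1) ∨ (2 ≤ i.val ∧ j.val = i.val + m) ∨
      (j.val = 1 ∧ i.val = m) ∨ (j.val = 0 ∧ i.val = m + 1) ∨ (2 ≤ j.val ∧ i.val = j.val + m) := by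
    intro i j h
    rcases lt_trichotomy i.val j.val with h1 | h1 | h1
    · have := hc' i j h1 h
      tauto
    · exact Or.inl h1
    · have := hc' j i h1 h.symm
      tauto
  refine ⟨c, rainbow_of_arc (by omega) c ?_, (inj_code_iff (by omega) c).2 ?_⟩
  · intro a b hab
    have hb := b.isLt
    rw [Fin.lt_def] at hab
    by_cases hd : b.val - a.val ≤ n / 2
    · left
      rintro x ⟨hx1, hx2⟩ y ⟨hy1, hy2⟩ hxy
      have := hc'' x y hxy
      rw [Fin.lt_def] at *
      apply Fin.ext
      omega
    · right
      intro x hx y hy hxy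
      have := hc'' x y hxy
      simp only [Set.mem_ofPred_eq, Fin.lt_def] at hx hy
      have := x.isLt
      have := y.isLt
      apply Fin.ext
      omega
  · have main : ∀ u v : Fin n, u < v → Dom c u v → Dom c v u → False := by
      intro u v huv h1 h2
      rw [Fin.lt_def] at huv
      have hv := v.isLt
      have hcuv : c u = c v := by
        obtain ⟨y, hy, hd⟩ := h1 u
        have hyl := y.isLt
        have : y = v := by
          apply Fin.ext
          unfold cd at hd
          omega
        rw [← this, hy]
      have two : ∀ w z : Fin n, w.val = 2 → c z = c w → z.val = 2 ∨ z.val = m + 2 := by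
        intro w z hw hz
        have := hc'' z w hz
        omega
      have zero : ∀ w z : Fin n, (w.val = 0 ∨ w.val = m + 1) → c z = c w →
          z.val = 0 ∨ z.val = m + 1 := by
        intro w z hw hz
        have := hc'' z w hz
        omega
      rcases hc' u v huv hcuv with ⟨hu, hv'⟩ | ⟨hu, hv'⟩ | ⟨hu, hv'⟩
      · obtain ⟨y, hy, hd⟩ := h1 ⟨2, by omega⟩
        have := two _ y rfl hy
        unfold cd at hd
        simp only at hd
        omega
      · have hcc : c ⟨m + 2, by omega⟩ = c ⟨2, by omega⟩ := by
          apply Fin.ext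
          simp only [c, colNat]
          split_ifs <;> omega
        obtain ⟨y, hy, hd⟩ := h2 ⟨m + 2, by omega⟩
        have := two _ y rfl (hy.trans hcc)
        unfold cd at hd
        simp only at hd
        omega
      · obtain ⟨y, hy, hd⟩ := h2 ⟨0, by omega⟩
        obtain ⟨y', hy', hd'⟩ := h2 ⟨m + 1, by omega⟩
        have := zero _ y (Or.inl rfl) hy
        have := zero _ y' (Or.inr rfl) hy'
        unfold cd at hd hd'
        simp only at hd hd'
        omega
    intro u v h1 h2
    by_contra hne
    rcases lt_or_gt_of_ne hne with h | h
    · exact main u v h h1 h2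
    · exact main v u h h2 h1

lemma relabel {n k l : ℕ} (f : Fin k → Fin l) (hinj : Function.Injective f) (c : Fin n → Fin k)
    (h : Arc c) (hi : ∀ u v, Dom c u v → Dom c v u → u = v) :
    Arc (fun i => f (c i)) ∧
      ∀ u v, Dom (fun i => f (c i)) u v → Dom (fun i => f (c i)) v u → u = v := by
  refine ⟨?_, ?_⟩
  · intro a b hab
    rcases h a b hab with h1 | h1
    · exact Or.inl fun x hx y hy hxy => h1 hx hy (hinj hxy)
    · exact Or.inr fun x hx y hy hxy => h1 hx hy (hinj hxy)
  · have aux : ∀ u v, Dom (fun i => f (c i)) u v → Dom c u v := by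
      intro u v h y
      obtain ⟨y', h1, h2⟩ := h y
      exact ⟨y', hinj h1, h2⟩
    exact fun u v h1 h2 => hi u v (aux u v h1) (aux v u h2)

/-- Relabelling of three colors sending `x`, `y` to `0`, `1`. -/
def rel3 (x y t : Fin 3) : Fin 3 := if t = x then 0 else if t = y then 1 else 2

/-- Relabelling of four colors sending `x`, `y`, `z` to `0`, `1`, `2`. -/
def rel4 (x y z t : Fin 4) : Fin 4 := if t = x then 0 else if t = y then 1 else if t = z then 2 else 3

lemma rel3_inj : ∀ x y : Fin 3, x ≠ y → ∀ s t, rel3 x y s = rel3 x y t → s = t := by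
  decide +kernel

lemma rel4_inj : ∀ x y z : Fin 4, x ≠ y → y ≠ z → x ≠ z →
    ∀ s t, rel4 x y z s = rel4 x y z t → s = t := by
  decide +kernel

lemma fin8 : ∀ a0 : Fin 3, a0 = 0 → ∀ a1 : Fin 3, a1 = 1 → ∀ a2, a1 ≠ a2 → ∀ a3, a2 ≠ a3 → ∀ a4, a3 ≠ a4 →
    ∀ a5, a4 ≠ a5 → ∀ a6, a5 ≠ a6 → ∀ a7, a6 ≠ a7 → a0 ≠ a7 →
    (a1 ≠ a3 ∨ a5 ≠ a7) → (a2 ≠ a4 ∨ a0 ≠ a6) → (a3 ≠ a5 ∨ a1 ≠ a7) → (a4 ≠ a6 ∨ a0 ≠ a2) →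
    ∃ u v : Fin 8, u < v ∧ Dom ![a0, a1, a2, a3, a4, a5, a6, a7] u v ∧
      Dom ![a0, a1, a2, a3, a4, a5, a6, a7] v u := by
  decide +kernel

set_option synthInstance.maxSize 4000 in
set_option synthInstance.maxHeartbeats 400000 in
lemma fin10 : ∀ a0 : Fin 4, a0 = 0 → ∀ a1 : Fin 4, a1 = 1 → ∀ a2 : Fin 4, a2 = 2 →
    ∀ a3, a2 ≠ a3 → a1 ≠ a3 → ∀ a4, a3 ≠ a4 → a2 ≠ a4 → ∀ a5, a4 ≠ a5 → a3 ≠ a5 →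
    ∀ a6, a5 ≠ a6 → a4 ≠ a6 → ∀ a7, a6 ≠ a7 → a5 ≠ a7 → ∀ a8, a7 ≠ a8 → a6 ≠ a8 → a0 ≠ a8 →
    ∀ a9, a8 ≠ a9 → a7 ≠ a9 → a0 ≠ a9 → a1 ≠ a9 →
    (a1 ≠ a4 ∨ a6 ≠ a9) → (a2 ≠ a5 ∨ a0 ≠ a7) → (a3 ≠ a6 ∨ a1 ≠ a8) →
    (a4 ≠ a7 ∨ a2 ≠ a9) → (a5 ≠ a8 ∨ a0 ≠ a3) →
    ∃ u v : Fin 10, u < v ∧ Dom ![a0, a1, a2, a3, a4, a5, a6, a7, a8, a9] u v ∧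
      Dom ![a0, a1, a2, a3, a4, a5, a6, a7, a8, a9] v u := by
  decide +kernel

lemma arc_ne {n k : ℕ} (c : Fin n → Fin k) (h : Arc c) (a b x y z w : Fin n) (hab : a < b)
    (hx : a < x ∧ x < b) (hy : a < y ∧ y < b) (hxy : x ≠ y)
    (hz : z < a ∨ b < z) (hw : w < a ∨ b < w) (hzw : z ≠ w) : c x ≠ c y ∨ c z ≠ c w := by
  rcases h a b hab with h1 | h1
  · exact Or.inl fun he => hxy (h1 hx hy he)
  · exact Or.inr fun he => hzw (h1 hz hw he)

lemma no8 (c : Fin 8 → Fin 3) (h : Arc c) (hi : ∀ u v, Dom c u v → Dom c v u → u = v)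
    (e0 : c 0 = 0) (e1 : c 1 = 1) : False := by
  have g : ∀ a b : Fin 8, a < b → (b.val - a.val < 2 ∨ 6 < b.val - a.val) → c a ≠ c b := by
    intro a b hab hd hc
    have := gap (by norm_num) c h a b hab hc
    omega
  obtain ⟨u, v, huv, h1, h2⟩ := fin8 (c 0) e0 (c 1) e1
    (c 2) (g 1 2 (by decide) (by decide)) (c 3) (g _ _ (by decide) (by decide))
    (c 4) (g _ _ (by decide) (by decide)) (c 5) (g _ _ (by decide) (by decide))
    (c 6) (g _ _ (by decide) (by decide)) (c 7) (g _ _ (by decide) (by decide))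
    (g _ _ (by decide) (by decide))
    (arc_ne c h 0 4 _ _ _ _ (by decide) (by decide) (by decide) (by decide) (by decide)
      (by decide) (by decide))
    (arc_ne c h 1 5 _ _ _ _ (by decide) (by decide) (by decide) (by decide) (by decide)
      (by decide) (by decide))
    (arc_ne c h 2 6 _ _ _ _ (by decide) (by decide) (by decide) (by decide) (by decide)
      (by decide) (by decide))
    (arc_ne c h 3 7 _ _ _ _ (by decide) (by decide) (by decide) (by decide) (by decide)
      (by decide) (by decide))
  have he : ![c 0, c 1, c 2, c 3, c 4, c 5, c 6, c 7] = c := by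
    funext i; fin_cases i <;> rfl
  rw [he] at h1 h2
  exact huv.ne (hi u v h1 h2)

lemma no10 (c : Fin 10 → Fin 4) (h : Arc c) (hi : ∀ u v, Dom c u v → Dom c v u → u = v)
    (e0 : c 0 = 0) (e1 : c 1 = 1) (e2 : c 2 = 2) : False := by
  have g : ∀ a b : Fin 10, a < b → (b.val - a.val < 3 ∨ 7 < b.val - a.val) → c a ≠ c b := by
    intro a b hab hd hc
    have := gap (by norm_num) c h a b hab hc
    omega
  obtain ⟨u, v, huv, h1, h2⟩ := fin10 (c 0) e0 (c 1) e1 (c 2) e2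
    (c 3) (g _ _ (by decide) (by decide)) (g _ _ (by decide) (by decide))
    (c 4) (g _ _ (by decide) (by decide)) (g _ _ (by decide) (by decide))
    (c 5) (g _ _ (by decide) (by decide)) (g _ _ (by decide) (by decide))
    (c 6) (g _ _ (by decide) (by decide)) (g _ _ (by decide) (by decide))
    (c 7) (g _ _ (by decide) (by decide)) (g _ _ (by decide) (by decide))
    (c 8) (g _ _ (by decide) (by decide)) (g _ _ (by decide) (by decide))
    (g _ _ (by decide) (by decide))
    (c 9) (g _ _ (by decide) (by decide)) (g _ _ (by decide) (by decide))
    (g _ _ (by decide) (by decide)) (g _ _ (by decide) (by decide))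
    (arc_ne c h 0 5 _ _ _ _ (by decide) (by decide) (by decide) (by decide) (by decide)
      (by decide) (by decide))
    (arc_ne c h 1 6 _ _ _ _ (by decide) (by decide) (by decide) (by decide) (by decide)
      (by decide) (by decide))
    (arc_ne c h 2 7 _ _ _ _ (by decide) (by decide) (by decide) (by decide) (by decide)
      (by decide) (by decide))
    (arc_ne c h 3 8 _ _ _ _ (by decide) (by decide) (by decide) (by decide) (by decide)
      (by decide) (by decide))
    (arc_ne c h 4 9 _ _ _ _ (by decide) (by decide) (by decide) (by decide) (by decide)
      (by decide) (by decide))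
  have he : ![c 0, c 1, c 2, c 3, c 4, c 5, c 6, c 7, c 8, c 9] = c := by
    funext i; fin_cases i <;> rfl
  rw [he] at h1 h2
  exact huv.ne (hi u v h1 h2)

lemma no8_all (c : Fin 8 → Fin 3) (h : Arc c) (hi : ∀ u v, Dom c u v → Dom c v u → u = v) :
    False := by
  have h01 : c 0 ≠ c 1 := by
    intro hc
    have := (gap (by norm_num) c h 0 1 (by decide) hc).1
    revert this
    decide
  obtain ⟨h1, h2⟩ := relabel (rel3 (c 0) (c 1)) (fun s t => rel3_inj _ _ h01 s t) c h hi
  exact no8 _ h1 h2 (by simp [rel3]) (by simp [rel3, h01.symm])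

lemma no10_all (c : Fin 10 → Fin 4) (h : Arc c) (hi : ∀ u v, Dom c u v → Dom c v u → u = v) :
    False := by
  have g : ∀ a b : Fin 10, a < b → b.val - a.val < 3 → c a ≠ c b := by
    intro a b hab hd hc
    have := gap (by norm_num) c h a b hab hc
    omega
  have h01 : c 0 ≠ c 1 := g 0 1 (by decide) (by decide)
  have h12 : c 1 ≠ c 2 := g 1 2 (by decide) (by decide)
  have h02 : c 0 ≠ c 2 := g 0 2 (by decide) (by decide)
  obtain ⟨h1, h2⟩ := relabel (rel4 (c 0) (c 1) (c 2))
    (fun s t => rel4_inj _ _ _ h01 h12 h02 s t) c h hi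
  exact no10 _ h1 h2 (by simp [rel4]) (by simp [rel4, h01.symm])
    (by simp [rel4, h12.symm, h02.symm])

end LocatingRainbow

open LocatingRainbow SimpleGraph in
/-- For every integer `n` with `n = 8`, `n = 10`, `n = 14`, or `n ≥ 16`, the cycle `C_n`
satisfies `rvcl(C_n) = ⌈n/2⌉`. -/
theorem rvcl_cycleGraph_large (n : ℕ) (hn : n = 8 ∨ n = 10 ∨ n = 14 ∨ 16 ≤ n) :
    rvcl (cycleGraph n) = (n + 1) / 2 := by
  unfold rvcl
  apply le_antisymm
  · exact Nat.sInf_le (exists_coloring n hn)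
  · refine le_csInf ⟨_, exists_coloring n hn⟩ ?_
    rintro k ⟨c, hc, hinj⟩
    have harc := arc_of_rainbow (by omega) c hc
    rw [inj_code_iff (by omega)] at hinj
    by_contra hlt
    rcases hn with rfl | rfl | hn
    · obtain ⟨h1, h2⟩ := relabel (Fin.castLE (show k ≤ 3 by omega)) (Fin.castLE_injective _) c harc hinj
      exact no8_all _ h1 h2
    · obtain ⟨h1, h2⟩ := relabel (Fin.castLE (show k ≤ 4 by omega)) (Fin.castLE_injective _) c harc hinj
      exact no10_all _ h1 h2
    · exact no_arc_large hn (by omega) c harc
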